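/- arXiv:math/0612331 — 2 statements merged into one kernel-verified Lean document; each statement's English description precedes it below -/
import Mathlib

section
/- mr(F₂, full house) = 3, where F₂ is the field with two elements and the full house is the graph on vertex set {1,2,3,4,5} with edge set {12, 13, 23, 24, 25, 34, 35, 45}. -/
/-!
In the full house, `1, 2` and `3, 4` are pairs of adjacent twins: the vertices of a pair have the
same closed neighbourhood. Taking one row and one column from each of the classes `{0}`, `{1, 2}`,
`{3, 4}`, with different representatives for the row and the column of a pair, gives a minor of
order three which avoids the free diagonal entries at `1, 2, 3, 4`. Over `F₂` the free entry at `0`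
is multiplied by a minor of order two with all entries `1`, so the minor of order three does not
depend on it and equals `-1`. Conversely, giving twins equal rows and columns realizes the full
house by repeating rows and columns of a `3 × 3` matrix.
-/

open Matrix

/-- `A` is a symmetric matrix over `F` whose off-diagonal nonzero pattern is
given by the graph `G` (diagonal entries are unconstrained). -/
def IsGraphMatrix (F : Type*) [Field F] {V : Type*} (G : SimpleGraph V)
    (A : Matrix V V F) : Prop :=
  A.IsSymm ∧ ∀ i j : V, i ≠ j → (A i j ≠ 0 ↔ G.Adj i j)

/-- The minimum rank `mr(F, G)` of the graph `G` over the field `F`. -/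
noncomputable def minRank (F : Type*) [Field F] {V : Type*} [Fintype V]
    (G : SimpleGraph V) : ℕ :=
  sInf {r : ℕ | ∃ A : Matrix V V F, IsGraphMatrix F G A ∧ A.rank = r}

/-- The full house graph: vertices `{0, 1, 2, 3, 4}` with edges
`01, 02, 12, 13, 14, 23, 24, 34` (the graph `12, 13, 23, 24, 25, 34, 35, 45`
on `{1, …, 5}` in 1-indexed notation). -/
def fullHouse : SimpleGraph (Fin 5) :=
  SimpleGraph.fromEdgeSet {s(0,1), s(0,2), s(1,2), s(1,3), s(1,4), s(2,3), s(2,4), s(3,4)}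

theorem card_le_rank_of_det_submatrix_ne_zero {R m n p : Type*} [CommRing R] [IsDomain R]
    [Fintype n] [Fintype p] [DecidableEq p] (A : Matrix m n R) (r : p → m) (c : p → n)
    (h : (A.submatrix r c).det ≠ 0) : Fintype.card p ≤ A.rank :=
  (rank_of_det_ne_zero h).symm.trans_le (A.rank_submatrix_le r c)

section GraphMatrix

variable {F V : Type*} [Field F] {G : SimpleGraph V} {A : Matrix V V F} {i j : V}

theorem exists_isGraphMatrix (F : Type*) [Field F] (G : SimpleGraph V) :
    ∃ A : Matrix V V F, IsGraphMatrix F G A := by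
  classical
  exact ⟨G.adjMatrix F, G.isSymm_adjMatrix, fun i j _ => by simp [SimpleGraph.adjMatrix_apply]⟩

namespace IsGraphMatrix

theorem apply_ne_zero_of_adj (hA : IsGraphMatrix F G A) (h : G.Adj i j) : A i j ≠ 0 :=
  (hA.2 i j h.ne).2 h

theorem apply_eq_zero_of_not_adj (hA : IsGraphMatrix F G A) (hij : i ≠ j) (h : ¬G.Adj i j) :
    A i j = 0 :=
  not_not.1 (mt (hA.2 i j hij).1 h)

theorem apply_eq_one_of_adj {A : Matrix V V (ZMod 2)} (hA : IsGraphMatrix (ZMod 2) G A)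
    (h : G.Adj i j) : A i j = 1 :=
  Fin.eq_one_of_ne_zero _ (hA.apply_ne_zero_of_adj h)

theorem minRank_le_rank [Fintype V] (hA : IsGraphMatrix F G A) : minRank F G ≤ A.rank :=
  Nat.sInf_le ⟨A, hA, rfl⟩

end IsGraphMatrix

theorem le_minRank [Fintype V] {k : ℕ} (h : ∀ A : Matrix V V F, IsGraphMatrix F G A → k ≤ A.rank) :
    k ≤ minRank F G := by
  obtain ⟨A, hA⟩ := exists_isGraphMatrix F G
  refine le_csInf ⟨A.rank, A, hA, rfl⟩ ?_
  rintro _ ⟨B, hB, rfl⟩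
  exact h B hB

end GraphMatrix

theorem IsGraphMatrix.three_le_rank_of_fullHouse {F : Type*} [Field F]
    {A : Matrix (Fin 5) (Fin 5) F} (hA : IsGraphMatrix F fullHouse A)
    (h : A 1 2 * A 3 4 = A 1 4 * A 3 2) : 3 ≤ A.rank := by
  have h04 : A 0 4 = 0 := hA.apply_eq_zero_of_not_adj (by decide) (by simp [fullHouse])
  have h30 : A 3 0 = 0 := hA.apply_eq_zero_of_not_adj (by decide) (by simp [fullHouse])
  have h02 : A 0 2 ≠ 0 := hA.apply_ne_zero_of_adj (by simp [fullHouse])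
  have h10 : A 1 0 ≠ 0 := hA.apply_ne_zero_of_adj (by simp [fullHouse])
  have h34 : A 3 4 ≠ 0 := hA.apply_ne_zero_of_adj (by simp [fullHouse])
  have hdet : (A.submatrix ![0, 1, 3] ![0, 2, 4]).det
      = A 0 0 * (A 1 2 * A 3 4 - A 1 4 * A 3 2) - A 0 2 * A 1 0 * A 3 4 := by
    rw [det_fin_three]
    simp only [submatrix_apply, cons_val, h04, h30]
    ring
  have hdet_ne : (A.submatrix ![0, 1, 3] ![0, 2, 4]).det ≠ 0 := by
    rw [hdet, h, sub_self, mul_zero, zero_sub, neg_ne_zero]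
    exact mul_ne_zero (mul_ne_zero h02 h10) h34
  simpa using card_le_rank_of_det_submatrix_ne_zero A _ _ hdet_ne

theorem minRank_fullHouse_le_three (F : Type*) [Field F] : minRank F fullHouse ≤ 3 := by
  let M : Matrix (Fin 3) (Fin 3) F := !![1, 1, 0; 1, 1, 1; 0, 1, 1]
  let f : Fin 5 → Fin 3 := ![0, 1, 1, 2, 2]
  have hsymm : M.IsSymm := IsSymm.ext fun i j => by fin_cases i <;> fin_cases j <;> rfl
  have hA : IsGraphMatrix F fullHouse (M.submatrix f f) :=
    ⟨hsymm.submatrix f, fun i j _ => by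
      fin_cases i <;> fin_cases j <;> simp_all [M, f, fullHouse]⟩
  calc minRank F fullHouse ≤ (M.submatrix f f).rank := hA.minRank_le_rank
    _ ≤ M.rank := M.rank_submatrix_le f f
    _ ≤ 3 := M.rank_le_width

/-- The minimum rank of the full house graph over the field `F₂` of two elements is `3`. -/
theorem minRank_fullHouse_F2 : minRank (ZMod 2) fullHouse = 3 := by
  refine le_antisymm (minRank_fullHouse_le_three _)
    (le_minRank fun A hA => hA.three_le_rank_of_fullHouse ?_)
  have h12 : A 1 2 = 1 := hA.apply_eq_one_of_adj (by simp [fullHouse])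
  have h34 : A 3 4 = 1 := hA.apply_eq_one_of_adj (by simp [fullHouse])
  have h14 : A 1 4 = 1 := hA.apply_eq_one_of_adj (by simp [fullHouse])
  have h32 : A 3 2 = 1 := hA.apply_eq_one_of_adj (by simp [fullHouse])
  rw [h12, h34, h14, h32]
end

section
/- Let F be a field and k a positive integer. Every graph G in F_{k+1}(F) contains an induced subgraph H belonging to F_k(F) such that G ∈ F_{k+1}(F,H). Equivalently, F_{k+1}(F) ⊆ ⋃_{H ∈ F_k(F)} F_{k+1}(F,H). -/
/-!
Minimum rank is monotone under induced subgraphs, since restricting a matrix for `G` to the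
vertices of an induced subgraph does not increase its rank. Hence if `mr(F, G) ≥ k`, an
inclusion-minimal vertex set `W` with `mr(F, G[W]) ≥ k` induces a subgraph in `F_k(F)`. If `G` is in
`F_{k+1}(F)`, then `mr(F, G - v) ≤ k` holds at all vertices `v`, in particular at those outside
any given induced copy of `H`, so the relative condition is automatic.
-/

open Matrix

/-- The graph `G - v` obtained from `G` by deleting the vertex `v`. -/
def deleteVert {V : Type*} (G : SimpleGraph V) (v : V) : SimpleGraph {u : V // u ≠ v} :=
  SimpleGraph.comap Subtype.val G

/-- The induced subgraph of `G` on a finite set `W` of vertices. -/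
def inducedSub {V : Type*} (G : SimpleGraph V) (W : Finset V) :
    SimpleGraph {x : V // x ∈ W} :=
  SimpleGraph.comap Subtype.val G

/-- `G ∈ F_K(F)`: `G` is a minimal forbidden subgraph for the class of graphs
with minimum rank at most `K - 1` over `F`, i.e. `mr(F, G) ≥ K` and
`mr(F, G - v) ≤ K - 1` for every vertex `v`. -/
def MemForbClass (F : Type*) [Field F] (K : ℕ) {V : Type*} [Fintype V] [DecidableEq V]
    (G : SimpleGraph V) : Prop :=
  K ≤ minRank F G ∧ ∀ v : V, minRank F (deleteVert G v) + 1 ≤ K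

/-- `G ∈ F_K(F, H)`: `G` contains `H` as an induced subgraph, `mr(F, G) ≥ K`, and for
some induced copy of `H` in `G` (an embedding `f : H ↪g G`), `mr(F, G - v) ≤ K - 1`
for every vertex `v` of `G` outside that copy. -/
def MemForbRel (F : Type*) [Field F] (K : ℕ) {VH VG : Type*} [Fintype VH] [Fintype VG]
    [DecidableEq VG] (H : SimpleGraph VH) (G : SimpleGraph VG) : Prop :=
  K ≤ minRank F G ∧
    ∃ f : H ↪g G, ∀ v : VG, v ∉ Set.range f → minRank F (deleteVert G v) + 1 ≤ K

section IsGraphMatrix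

variable {F : Type*} [Field F] {U V : Type*} {G : SimpleGraph V} {A : Matrix V V F}

lemma isGraphMatrix_adjMatrix [DecidableRel G.Adj] : IsGraphMatrix F G (G.adjMatrix F) :=
  ⟨G.isSymm_adjMatrix, fun i j _ => by simp [SimpleGraph.adjMatrix_apply]⟩

lemma IsGraphMatrix.submatrix {H : SimpleGraph U} (hA : IsGraphMatrix F G A) (f : H ↪g G) :
    IsGraphMatrix F H (A.submatrix f f) :=
  ⟨hA.1.submatrix f, fun _ _ hij => (hA.2 _ _ (f.injective.ne hij)).trans f.map_adj_iff⟩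

lemma IsGraphMatrix.minRank_le_rank_s2 [Fintype V] (hA : IsGraphMatrix F G A) :
    minRank F G ≤ A.rank :=
  Nat.sInf_le ⟨A, hA, rfl⟩

end IsGraphMatrix

section minRank

variable (F : Type*) [Field F] {U V : Type*} [Fintype V]

lemma exists_isGraphMatrix_rank_eq_minRank (G : SimpleGraph V) :
    ∃ A : Matrix V V F, IsGraphMatrix F G A ∧ A.rank = minRank F G := by
  classical
  exact Nat.sInf_mem (s := {r | ∃ A : Matrix V V F, IsGraphMatrix F G A ∧ A.rank = r})
    ⟨_, G.adjMatrix F, isGraphMatrix_adjMatrix, rfl⟩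

lemma minRank_le_of_embedding [Fintype U] {H : SimpleGraph U} {G : SimpleGraph V} (f : H ↪g G) :
    minRank F H ≤ minRank F G := by
  obtain ⟨A, hA, hrank⟩ := exists_isGraphMatrix_rank_eq_minRank F G
  calc
    minRank F H ≤ (A.submatrix f f).rank := (hA.submatrix f).minRank_le_rank_s2
    _ ≤ A.rank := A.rank_submatrix_le f f
    _ = minRank F G := hrank

end minRank

section inducedSub

variable {U V : Type*}

/-- The inclusion of the induced subgraph `G[W]` into `G`. -/
def inducedSub.embedding (G : SimpleGraph V) (W : Finset V) : inducedSub G W ↪g G :=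
  SimpleGraph.Embedding.comap (.subtype _) G

/-- The inclusion of the vertex-deleted subgraph `G - v` into `G`. -/
def deleteVert.embedding (G : SimpleGraph V) (v : V) : deleteVert G v ↪g G :=
  SimpleGraph.Embedding.comap (.subtype _) G

/-- The embedding `H ↪g G[W]` obtained from an embedding `H ↪g G` whose image lies in `W`. -/
def inducedSub.codRestrict {H : SimpleGraph U} {G : SimpleGraph V} {W : Finset V} (f : H ↪g G)
    (hf : ∀ u, f u ∈ W) : H ↪g inducedSub G W where
  toFun u := ⟨f u, hf u⟩
  inj' _ _ h := f.injective (congrArg Subtype.val h)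
  map_rel_iff' := f.map_adj_iff

variable (F : Type*) [Field F] (G : SimpleGraph V)

lemma minRank_le_minRank_inducedSub_univ [Fintype V] :
    minRank F G ≤ minRank F (inducedSub G Finset.univ) :=
  minRank_le_of_embedding F
    (inducedSub.codRestrict SimpleGraph.Embedding.refl fun _ => Finset.mem_univ _)

lemma minRank_deleteVert_inducedSub_le [DecidableEq V] (W : Finset V) (v : {x : V // x ∈ W}) :
    minRank F (deleteVert (inducedSub G W) v) ≤ minRank F (inducedSub G (W.erase v)) :=
  minRank_le_of_embedding F <|
    inducedSub.codRestrict
      ((inducedSub.embedding G W).comp (deleteVert.embedding (inducedSub G W) v))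
      fun u => Finset.mem_erase.2 ⟨Subtype.coe_ne_coe.2 u.2, u.1.2⟩

end inducedSub

section Forbidden

variable {F : Type*} [Field F] {k : ℕ} {U V : Type*} [DecidableEq V] {G : SimpleGraph V}

lemma memForbClass_inducedSub_of_minimal {W : Finset V}
    (hW : Minimal (fun W : Finset V => k ≤ minRank F (inducedSub G W)) W) :
    MemForbClass F k (inducedSub G W) := by
  refine ⟨hW.prop, fun v => ?_⟩
  have herase : minRank F (inducedSub G (W.erase v)) < k :=
    not_le.1 (hW.not_prop_of_lt (Finset.erase_ssubset v.2))
  exact (minRank_deleteVert_inducedSub_le F G W v).trans_lt herase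

lemma exists_memForbClass_inducedSub_of_le_minRank [Fintype V] (hk : k ≤ minRank F G) :
    ∃ W : Finset V, MemForbClass F k (inducedSub G W) := by
  obtain ⟨W, hW⟩ := exists_minimal_of_wellFoundedLT
    (fun W : Finset V => k ≤ minRank F (inducedSub G W))
    ⟨Finset.univ, hk.trans (minRank_le_minRank_inducedSub_univ F G)⟩
  exact ⟨W, memForbClass_inducedSub_of_minimal hW⟩

lemma MemForbClass.memForbRel [Fintype U] [Fintype V] {H : SimpleGraph U}
    (hG : MemForbClass F k G) (f : H ↪g G) : MemForbRel F k H G :=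
  ⟨hG.1, f, fun v _ => hG.2 v⟩

end Forbidden

/-- Every graph `G` in `F_{k+1}(F)` contains an induced subgraph `H` belonging to
`F_k(F)` such that `G ∈ F_{k+1}(F, H)`. -/
theorem forbClass_subset_iUnion_forbRel (F : Type*) [Field F] (k : ℕ) (hk : 0 < k)
    {V : Type*} [Fintype V] [DecidableEq V] (G : SimpleGraph V)
    (hG : MemForbClass F (k + 1) G) :
    ∃ W : Finset V,
      MemForbClass F k (inducedSub G W) ∧ MemForbRel F (k + 1) (inducedSub G W) G := by
  obtain ⟨W, hW⟩ := exists_memForbClass_inducedSub_of_le_minRank ((Nat.le_succ k).trans hG.1)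
  exact ⟨W, hW, hG.memForbRel (inducedSub.embedding G W)⟩
end
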